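/- arXiv:0908.2277 — 2 statements merged into one kernel-verified Lean document; each statement's English description precedes it below -/
import Mathlib

section
/- Lemma 1, upper bound: For every integer N_t ≥ 2 and every real B ≥ 0, setting n = 2^B and B̄ = B/N_t, the quantity E[ν] := 1 − n·Beta(n, N_t/(N_t−1)) satisfies E[ν] ≤ 1 − 2^{−B̄} + (1 + (γ − 1)·2^{−B̄} + 2^{−B̄·N_t})/(N_t − 1), where γ is the Euler–Mascheroni constant. -/
/-- The Euler Beta function `Beta(x,y) = ∫₀¹ t^{x-1} (1-t)^{y-1} dt`. -/
noncomputable def Beta (x y : ℝ) : ℝ := ∫ t in (0:ℝ)..1, t ^ (x - 1) * (1 - t) ^ (y - 1)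

/-!
Write `n = 2 ^ B`, `s = 1 / (N - 1)` and `q = n ^ (-1 / N)`. After multiplication by
`N - 1` the bound is `(N - γ) * q ≤ 1 + n⁻¹ + (N - 1) * (n * Beta n (1 + s))`.

For `s ≤ 1`, log-convexity of `Γ` together with its tangent line at `1` gives
`(1 - γ * s) * m ≤ n * Beta n (1 + s)`, where `m = (n + 1) ^ (-s)`. Since `q` is the weighted
geometric mean of `1 + n⁻¹` and `m` with weights `1 / N` and `1 - 1 / N`, AM-GM gives
`N * q ≤ 1 + n⁻¹ + (N - 1) * m`, and `m ≤ q` absorbs the terms with `γ`.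

For `s > 1`, AM-GM with `n⁻¹` and `1` shows that the bound already holds without the Beta term.
-/

open Real

local notation "γ" => eulerMascheroniConstant

lemma Beta_nonneg (x y : ℝ) : 0 ≤ Beta x y :=
  intervalIntegral.integral_nonneg zero_le_one fun _ ht ↦
    mul_nonneg (rpow_nonneg ht.1 _) (rpow_nonneg (sub_nonneg.2 ht.2) _)

lemma ofReal_Beta (x y : ℝ) : (Beta x y : ℂ) = Complex.betaIntegral x y := by
  rw [Beta, Complex.betaIntegral, ← intervalIntegral.integral_ofReal]
  refine intervalIntegral.integral_congr fun t ht ↦ ?_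
  rw [Set.uIcc_of_le zero_le_one] at ht
  simp only [Complex.ofReal_mul, Complex.ofReal_cpow ht.1,
    Complex.ofReal_cpow (sub_nonneg.2 ht.2), Complex.ofReal_sub, Complex.ofReal_one]

lemma Beta_eq_Gamma_mul_div {x y : ℝ} (hx : 0 < x) (hy : 0 < y) :
    Beta x y = Gamma x * Gamma y / Gamma (x + y) := by
  have h := ProbabilityTheory.beta_eq_betaIntegralReal x y hx hy
  rw [← ofReal_Beta, Complex.ofReal_re] at h
  exact h.symm

lemma mul_Beta_eq_Gamma_mul_div {x y : ℝ} (hx : 0 < x) (hy : 0 < y) :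
    x * Beta x y = Gamma (x + 1) * Gamma y / Gamma (x + y) := by
  rw [Beta_eq_Gamma_mul_div hx hy, Gamma_add_one hx.ne']
  ring

lemma Gamma_add_le_Gamma_mul_rpow {x s : ℝ} (hx : 0 < x) (hs₀ : 0 ≤ s) (hs₁ : s ≤ 1) :
    Gamma (x + s) ≤ Gamma x * x ^ s := by
  have hΓ : 0 < Gamma x := Gamma_pos_of_pos hx
  have hxs : 0 < x ^ s := rpow_pos_of_pos hx s
  have log_convex := convexOn_log_Gamma.2 (Set.mem_Ioi.2 hx) (Set.mem_Ioi.2 (add_pos hx one_pos))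
    (sub_nonneg.2 hs₁) hs₀ (sub_add_cancel 1 s)
  rw [← log_le_log_iff (Gamma_pos_of_pos (add_pos_of_pos_of_nonneg hx hs₀)) (mul_pos hΓ hxs)]
  calc log (Gamma (x + s)) = log (Gamma ((1 - s) * x + s * (x + 1))) := by ring_nf
    _ ≤ (1 - s) * log (Gamma x) + s * log (Gamma (x + 1)) := log_convex
    _ = log (Gamma x * x ^ s) := by
      rw [Gamma_add_one hx.ne', log_mul hx.ne' hΓ.ne', log_mul hΓ.ne' hxs.ne', log_rpow hx]
      ring

lemma one_sub_eulerMascheroniConstant_mul_le_Gamma_one_add {s : ℝ} (hs : -1 < s) :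
    1 - γ * s ≤ Gamma (1 + s) := by
  have h₁ : (1 : ℝ) ∈ Set.Ioi 0 := Set.mem_Ioi.2 one_pos
  have h₁s : 1 + s ∈ Set.Ioi 0 := Set.mem_Ioi.2 (by linarith)
  rcases lt_trichotomy s 0 with neg | rfl | pos
  · have slope_le := convexOn_Gamma.slope_le_of_hasDerivAt h₁s h₁ (by linarith)
      hasDerivAt_Gamma_one
    rw [slope_def_field, Gamma_one, div_le_iff₀ (by linarith)] at slope_le
    linarith
  · simp
  · have le_slope := convexOn_Gamma.le_slope_of_hasDerivAt h₁ h₁s (by linarith)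
      hasDerivAt_Gamma_one
    rw [slope_def_field, Gamma_one, le_div_iff₀ (by linarith)] at le_slope
    linarith

lemma one_sub_mul_rpow_le_mul_Beta {n s : ℝ} (hn : 0 < n) (hs₀ : 0 ≤ s) (hs₁ : s ≤ 1) :
    (1 - γ * s) * (n + 1) ^ (-s) ≤ n * Beta n (1 + s) := by
  have hΓ : 0 < Gamma (n + 1) := Gamma_pos_of_pos (by linarith)
  have rpow_le : (n + 1) ^ (-s) ≤ Gamma (n + 1) / Gamma (n + 1 + s) := by
    rw [rpow_neg (by linarith), inv_le_comm₀ (by positivity) (by positivity), inv_div,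
      div_le_iff₀' hΓ]
    exact Gamma_add_le_Gamma_mul_rpow (by linarith) hs₀ hs₁
  calc (1 - γ * s) * (n + 1) ^ (-s) ≤ Gamma (1 + s) * (n + 1) ^ (-s) := by
        gcongr
        exact one_sub_eulerMascheroniConstant_mul_le_Gamma_one_add (by linarith)
    _ ≤ Gamma (1 + s) * (Gamma (n + 1) / Gamma (n + 1 + s)) := by
        gcongr
    _ = n * Beta n (1 + s) := by
        rw [mul_Beta_eq_Gamma_mul_div hn (by linarith), ← add_assoc]
        ring

lemma mul_rpow_inv_mul_rpow_one_sub_inv_le {N x y : ℝ} (hN : 1 ≤ N) (hx : 0 ≤ x) (hy : 0 ≤ y) :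
    N * (x ^ N⁻¹ * y ^ (1 - N⁻¹)) ≤ x + (N - 1) * y := by
  have hN₀ : 0 < N := by linarith
  calc N * (x ^ N⁻¹ * y ^ (1 - N⁻¹)) ≤ N * (N⁻¹ * x + (1 - N⁻¹) * y) := by
        gcongr
        exact geom_mean_le_arith_mean2_weighted (inv_nonneg.2 hN₀.le)
          (sub_nonneg.2 (inv_le_one_of_one_le₀ hN)) hx hy (add_sub_cancel _ _)
    _ = x + (N - 1) * y := by field_simp

lemma mul_rpow_neg_inv_le_inv_add {n N : ℝ} (hn : 0 < n) (hN : 1 ≤ N) :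
    N * n ^ (-N⁻¹) ≤ n⁻¹ + (N - 1) := by
  simpa [inv_rpow hn.le, rpow_neg hn.le] using
    mul_rpow_inv_mul_rpow_one_sub_inv_le hN (inv_nonneg.2 hn.le) zero_le_one

lemma mul_rpow_neg_inv_le_one_add_inv_add {n N : ℝ} (hn : 0 < n) (hN : 1 < N) :
    N * n ^ (-N⁻¹) ≤ 1 + n⁻¹ + (N - 1) * (n + 1) ^ (-(N - 1)⁻¹) := by
  have hn₁ : 0 < n + 1 := by linarith
  have exponent_eq : -(N - 1)⁻¹ * (1 - N⁻¹) = -N⁻¹ := by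
    field_simp [(sub_pos.2 hN).ne']
  have geom_mean_eq :
      (1 + n⁻¹) ^ N⁻¹ * ((n + 1) ^ (-(N - 1)⁻¹)) ^ (1 - N⁻¹) = n ^ (-N⁻¹) := by
    rw [← rpow_mul hn₁.le, exponent_eq, show 1 + n⁻¹ = (n + 1) * n⁻¹ by field_simp,
      mul_rpow hn₁.le (inv_nonneg.2 hn.le), inv_rpow hn.le, ← rpow_neg hn.le, mul_right_comm,
      ← rpow_add hn₁, add_neg_cancel, rpow_zero, one_mul]
  rw [← geom_mean_eq]
  exact mul_rpow_inv_mul_rpow_one_sub_inv_le hN.le (by positivity) (by positivity)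

lemma add_one_rpow_neg_inv_sub_one_le {n N : ℝ} (hn : 0 < n) (hN : 1 < N) :
    (n + 1) ^ (-(N - 1)⁻¹) ≤ n ^ (-N⁻¹) := by
  have inv_le_inv : N⁻¹ ≤ (N - 1)⁻¹ := inv_anti₀ (sub_pos.2 hN) (by linarith)
  have hN₀ : 0 ≤ N⁻¹ := inv_nonneg.2 (by linarith)
  calc (n + 1) ^ (-(N - 1)⁻¹) ≤ (n + 1) ^ (-N⁻¹) :=
        rpow_le_rpow_of_exponent_le (by linarith) (neg_le_neg inv_le_inv)
    _ ≤ n ^ (-N⁻¹) := rpow_le_rpow_of_nonpos hn (by linarith) (by linarith)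

lemma sub_mul_rpow_neg_inv_le_mul_Beta {n N : ℝ} (hn : 0 < n) (hN : 1 < N) :
    (N - γ) * n ^ (-N⁻¹) ≤ 1 + n⁻¹ + (N - 1) * (n * Beta n (N / (N - 1))) := by
  have hN₁ : 0 < N - 1 := by linarith
  have hγ : 0 < γ := one_half_pos.trans one_half_lt_eulerMascheroniConstant
  rcases le_or_gt 2 N with two_le | lt_two
  · have Beta_bound := one_sub_mul_rpow_le_mul_Beta hn (inv_nonneg.2 hN₁.le)
      (inv_le_one_of_one_le₀ (by linarith : 1 ≤ N - 1))
    calc (N - γ) * n ^ (-N⁻¹) = N * n ^ (-N⁻¹) - γ * n ^ (-N⁻¹) := sub_mul ..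
      _ ≤ 1 + n⁻¹ + (N - 1) * (n + 1) ^ (-(N - 1)⁻¹) - γ * (n + 1) ^ (-(N - 1)⁻¹) :=
        sub_le_sub (mul_rpow_neg_inv_le_one_add_inv_add hn hN)
          (mul_le_mul_of_nonneg_left (add_one_rpow_neg_inv_sub_one_le hn hN) hγ.le)
      _ = 1 + n⁻¹ + (N - 1) * ((1 - γ * (N - 1)⁻¹) * (n + 1) ^ (-(N - 1)⁻¹)) := by
        field_simp
        ring
      _ ≤ 1 + n⁻¹ + (N - 1) * (n * Beta n (1 + (N - 1)⁻¹)) := by gcongr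
      _ = 1 + n⁻¹ + (N - 1) * (n * Beta n (N / (N - 1))) := by
        rw [show N / (N - 1) = 1 + (N - 1)⁻¹ by field_simp; ring]
  · have Beta_term_nonneg : 0 ≤ (N - 1) * (n * Beta n (N / (N - 1))) :=
      mul_nonneg hN₁.le (mul_nonneg hn.le (Beta_nonneg _ _))
    calc (N - γ) * n ^ (-N⁻¹) ≤ N * n ^ (-N⁻¹) := by
          gcongr
          linarith
      _ ≤ n⁻¹ + (N - 1) := mul_rpow_neg_inv_le_inv_add hn hN.le
      _ ≤ 1 + n⁻¹ + (N - 1) * (n * Beta n (N / (N - 1))) := by linarith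

theorem rvq_mean_upper_bound_general {N : ℝ} (hN : 1 < N) (B : ℝ) :
    1 - (2 : ℝ) ^ B * Beta ((2 : ℝ) ^ B) (N / (N - 1)) ≤
      1 - (2 : ℝ) ^ (-(B / N)) +
        (1 + (γ - 1) * (2 : ℝ) ^ (-(B / N)) + (2 : ℝ) ^ (-(B / N) * N)) / (N - 1) := by
  have hN₁ : 0 < N - 1 := by linarith
  have q_eq : (2 : ℝ) ^ (-(B / N)) = ((2 : ℝ) ^ B) ^ (-N⁻¹) := by
    rw [← rpow_mul zero_le_two, mul_neg, div_eq_mul_inv]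
  have inv_eq : (2 : ℝ) ^ (-(B / N) * N) = ((2 : ℝ) ^ B)⁻¹ := by
    rw [neg_mul, div_mul_cancel₀ B (by linarith), rpow_neg zero_le_two]
  have key := sub_mul_rpow_neg_inv_le_mul_Beta (rpow_pos_of_pos two_pos B) hN
  rw [q_eq, inv_eq, ← sub_le_iff_le_add', le_div_iff₀ hN₁]
  linarith

/-- Lemma 1, upper bound: for `N_t ≥ 2` and `B ≥ 0`, with `n = 2^B` and `B̄ = B/N_t`,
`E[ν] = 1 − n·Beta(n, N_t/(N_t−1))` satisfies
`E[ν] ≤ 1 − 2^{−B̄} + (1 + (γ − 1)·2^{−B̄} + 2^{−B̄·N_t})/(N_t − 1)`. -/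
theorem rvq_mean_upper_bound (Nt : ℕ) (hNt : 2 ≤ Nt) (B : ℝ) (hB : 0 ≤ B) :
    1 - (2:ℝ) ^ B * Beta ((2:ℝ) ^ B) ((Nt : ℝ) / ((Nt : ℝ) - 1)) ≤
      1 - (2:ℝ) ^ (-(B / (Nt : ℝ))) +
        (1 + (Real.eulerMascheroniConstant - 1) * (2:ℝ) ^ (-(B / (Nt : ℝ)))
            + (2:ℝ) ^ (-(B / (Nt : ℝ)) * (Nt : ℝ))) / ((Nt : ℝ) - 1) := by
  exact rvq_mean_upper_bound_general (by exact_mod_cast hNt) B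
end

section
/- Asymptotics of the optimized capacity upper bound (proof of Theorem 2): Fix reals ρ > 0, L̄ > 0, μ > 0. For each integer N_t ≥ 2 define on the compact set K = {(T̄, B̄) : T̄ ≥ 0, B̄ ≥ 0, T̄ + μ·B̄ ≤ L̄} the function F_{N_t}(T̄, B̄) = ((L̄ − T̄ − μ·B̄)/L̄)·log(1 + ρ·σ_w²(T̄) + ρ·(1 − σ_w²(T̄))·N_t·(1 − 2^{−B̄} + (1 + (γ−1)·2^{−B̄} + 2^{−B̄·N_t})/(N_t − 1))), where σ_w²(T̄) = 1 − T̄/(1 + ρ^{−1}) if T̄ < 1 and σ_w²(T̄) = 1/(1 + ρ·T̄) if T̄ ≥ 1. Then F_{N_t} attains a maximum on K, and any choice of maximizers (T̄°(N_t), B̄°(N_t)) satisfies T̄°(N_t)·log N_t → L̄ and B̄°(N_t)·log N_t → L̄/μ as N_t → ∞; moreover the maximum value M(N_t) satisfies M(N_t) − log(ρ·N_t) + 2·log log N_t → log(L̄²·log 2) − log(μ·(1 + ρ^{−1})) − 2. -/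
/-! Let `F` be the value of `capUB` at a feasible `(T, B)`, and write `n = log N`, `u = T n / L`,
`v = μ B n / L`. Up to a bounded error the argument of the logarithm is at most `R u v`, where `R`
is of order `N / n ^ 2`, so that `log R ∼ n`. The prefactor of the logarithm is `1 - (u + v) / n`,
so the identity `(1 - s) (1 + s) = 1 - s ^ 2` gives, at every feasible point,
`F (1 + (u + v) / n) ≤ log R + log (u v + o(1))`.
The trial point `u = v = 1` shows that the maximal `F` is at least `log R - 2 - o(1)`; inserting
this in the factor in front of `(u + v) / n` leaves
`F - log R ≤ log (u v + o(1)) - (1 + o(1)) (u + v)`.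
Since `log u + log v - u - v ≤ -2` with equality only at `u = v = 1`, the point `(u, v)` is forced
to `(1, 1)` and `F - log R` to `-2`. -/


open Filter Real

/-- MMSE channel-estimation error variance `σ_w²` as a function of the normalized training
length `T̄`, for SNR `ρ` (eq. (21) of the paper). -/
noncomputable def sigmaW2 (ρ Tbar : ℝ) : ℝ :=
  if Tbar < 1 then 1 - Tbar / (1 + ρ⁻¹) else 1 / (1 + ρ * Tbar)

/-- The feasible set of normalized training/feedback pairs `(T̄, B̄)`:
`T̄ ≥ 0`, `B̄ ≥ 0`, `T̄ + μ·B̄ ≤ L̄`. -/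
def feasible (μ L : ℝ) : Set (ℝ × ℝ) :=
  {p | 0 ≤ p.1 ∧ 0 ≤ p.2 ∧ p.1 + μ * p.2 ≤ L}

/-- The normalized upper bound `F_{N_t}(T̄, B̄)` on MISO beamforming capacity with
normalized training `T̄`, normalized feedback `B̄`, coherence time `L̄`, conversion factor `μ`,
and SNR `ρ` (Theorem 1 of the paper combined with the MMSE estimation error formula). -/
noncomputable def capUB (ρ L μ : ℝ) (Nt : ℕ) (p : ℝ × ℝ) : ℝ :=
  ((L - p.1 - μ * p.2) / L) *
    Real.log (1 + ρ * sigmaW2 ρ p.1 + ρ * (1 - sigmaW2 ρ p.1) * (Nt : ℝ) *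
      (1 - (2:ℝ) ^ (-p.2) +
        (1 + (Real.eulerMascheroniConstant - 1) * (2:ℝ) ^ (-p.2)
          + (2:ℝ) ^ (-(p.2 * (Nt : ℝ)))) / ((Nt : ℝ) - 1)))

open Topology

section LogGap

variable {α : Type*} {l : Filter α} {x y : ℝ}

/-- The gap in the inequality `log x ≤ x - 1`; it measures how far `x` is from the unique
equality case `x = 1`. -/
noncomputable def logGap (x : ℝ) : ℝ := x - 1 - log x

lemma logGap_nonneg (hx : 0 < x) : 0 ≤ logGap x :=
  sub_nonneg.2 (log_le_sub_one_of_pos hx)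

lemma logGap_mul (hx : x ≠ 0) (hy : y ≠ 0) : logGap (x * y) = x * y - 1 - log x - log y := by
  rw [logGap, log_mul hx hy]
  ring

lemma sq_sqrt_sub_one_le_logGap (hx : 0 < x) : (√x - 1) ^ 2 ≤ logGap x := by
  have hgap := logGap_nonneg (sqrt_pos.2 hx)
  rw [logGap, log_sqrt hx.le] at hgap
  rw [logGap, sub_sq, sq_sqrt hx.le]
  linarith

lemma tendsto_one_of_tendsto_logGap {f : α → ℝ} (hf : ∀ᶠ k in l, 0 < f k)
    (h : Tendsto (fun k ↦ logGap (f k)) l (𝓝 0)) : Tendsto f l (𝓝 1) := by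
  have hsq : Tendsto (fun k ↦ (√(f k) - 1) ^ 2) l (𝓝 0) :=
    squeeze_zero' (.of_forall fun _ ↦ sq_nonneg _)
      (hf.mono fun _ hk ↦ sq_sqrt_sub_one_le_logGap hk) h
  have habs : Tendsto (fun k ↦ |√(f k) - 1|) l (𝓝 0) := by
    simpa [sqrt_sq_eq_abs] using hsq.sqrt
  have hsqrt : Tendsto (fun k ↦ √(f k)) l (𝓝 1) := by
    simpa using ((tendsto_zero_iff_abs_tendsto_zero _).2 habs).add_const 1
  have hpow : Tendsto (fun k ↦ √(f k) ^ 2) l (𝓝 1) := by simpa using hsqrt.pow 2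
  exact hpow.congr' (hf.mono fun _ hk ↦ sq_sqrt hk.le)

lemma tendsto_one_of_logGap_mul_add_le {u c η e : α → ℝ} (hc : Tendsto c l (𝓝 1))
    (hη : Tendsto η l (𝓝 0)) (he : Tendsto e l (𝓝 0)) (hpos : ∀ᶠ k in l, 0 < c k * (u k + η k))
    (hle : ∀ᶠ k in l, logGap (c k * (u k + η k)) ≤ e k) : Tendsto u l (𝓝 1) := by
  have hprod : Tendsto (fun k ↦ c k * (u k + η k)) l (𝓝 1) :=
    tendsto_one_of_tendsto_logGap hpos
      (squeeze_zero' (hpos.mono fun _ hk ↦ logGap_nonneg hk) hle he)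
  have hlim := (hprod.div hc one_ne_zero).sub hη
  rw [div_one, sub_zero] at hlim
  refine hlim.congr' ?_
  filter_upwards [hc.eventually_ne one_ne_zero] with k hk
  simp only [Pi.div_apply, mul_div_cancel_left₀ _ hk, add_sub_cancel_right]

lemma log_mul_add_le {u v δ : ℝ} (hu : 0 ≤ u) (hv : 0 ≤ v) (hδ : 0 < δ) :
    log (u * v + δ) ≤ log (u + √δ) + log (v + √δ) := by
  have hs : 0 < √δ := sqrt_pos.2 hδ
  rw [← log_mul (by positivity) (by positivity)]
  refine log_le_log (by positivity) ?_
  nlinarith [sq_sqrt hδ.le, mul_nonneg (add_nonneg hu hv) hs.le]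

lemma logGap_add_logGap_le {u v c δ g : ℝ} (hu : 0 ≤ u) (hv : 0 ≤ v) (hc : 0 < c) (hδ : 0 < δ)
    (h : g + c * (u + v) ≤ log (u * v + δ)) :
    logGap (c * (u + √δ)) + logGap (c * (v + √δ)) + (g + 2) ≤ 2 * c * √δ - 2 * log c := by
  rw [logGap_mul hc.ne' (by positivity), logGap_mul hc.ne' (by positivity)]
  linarith [log_mul_add_le hu hv hδ]

/-- `log (u v) - (u + v)` has the strict maximum `-2` at `u = v = 1`; this is the stability of that
maximum under the perturbations `c → 1` and `δ → 0`. -/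
theorem tendsto_of_add_mul_le_log {u v g c δ r : α → ℝ} (hc : Tendsto c l (𝓝 1))
    (hδ : Tendsto δ l (𝓝 0)) (hr : Tendsto r l (𝓝 (-2))) (hδ_pos : ∀ᶠ k in l, 0 < δ k)
    (hu : ∀ᶠ k in l, 0 ≤ u k) (hv : ∀ᶠ k in l, 0 ≤ v k) (hrg : ∀ᶠ k in l, r k ≤ g k)
    (hg : ∀ᶠ k in l, g k + c k * (u k + v k) ≤ log (u k * v k + δ k)) :
    Tendsto u l (𝓝 1) ∧ Tendsto v l (𝓝 1) ∧ Tendsto g l (𝓝 (-2)) := by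
  have hη : Tendsto (fun k ↦ √(δ k)) l (𝓝 0) := by simpa using hδ.sqrt
  have hc_pos : ∀ᶠ k in l, 0 < c k := hc.eventually_const_lt one_pos
  have hu_pos : ∀ᶠ k in l, 0 < c k * (u k + √(δ k)) := by
    filter_upwards [hc_pos, hδ_pos, hu] with k _ _ _
    positivity
  have hv_pos : ∀ᶠ k in l, 0 < c k * (v k + √(δ k)) := by
    filter_upwards [hc_pos, hδ_pos, hv] with k _ _ _
    positivity
  have herr : Tendsto (fun k ↦ 2 * c k * √(δ k) - 2 * log (c k)) l (𝓝 0) := by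
    simpa using ((hc.const_mul 2).mul hη).sub ((hc.log one_ne_zero).const_mul 2)
  have herr_r : Tendsto (fun k ↦ 2 * c k * √(δ k) - 2 * log (c k) - (r k + 2)) l (𝓝 0) := by
    simpa using herr.sub (hr.add_const 2)
  have hgap : ∀ᶠ k in l, logGap (c k * (u k + √(δ k))) + logGap (c k * (v k + √(δ k))) +
      (g k + 2) ≤ 2 * c k * √(δ k) - 2 * log (c k) := by
    filter_upwards [hu, hv, hc_pos, hδ_pos, hg] with k using logGap_add_logGap_le
  refine ⟨tendsto_one_of_logGap_mul_add_le hc hη herr_r hu_pos ?_,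
    tendsto_one_of_logGap_mul_add_le hc hη herr_r hv_pos ?_,
    tendsto_of_tendsto_of_tendsto_of_le_of_le' hr (by simpa using herr.sub_const 2) hrg ?_⟩
  all_goals
    filter_upwards [hgap, hrg, hu_pos, hv_pos] with k hk hrk huk hvk
    linarith [logGap_nonneg huk, logGap_nonneg hvk]

end LogGap

section RPow

variable {a : ℝ}

lemma one_sub_rpow_neg_le (ha : 0 < a) (x : ℝ) : 1 - a ^ (-x) ≤ x * log a := by
  rw [rpow_def_of_pos ha]
  linarith [add_one_le_exp (log a * -x)]

lemma mul_log_mul_rpow_neg_le (ha : 0 < a) (x : ℝ) :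
    x * log a * a ^ (-x) ≤ 1 - a ^ (-x) := by
  have hexp : x * log a ≤ a ^ x - 1 := by
    have := one_sub_rpow_neg_le ha (-x)
    rw [neg_neg] at this
    linarith
  calc x * log a * a ^ (-x) ≤ (a ^ x - 1) * a ^ (-x) := by gcongr
    _ = 1 - a ^ (-x) := by rw [sub_mul, ← rpow_add ha, add_neg_cancel, rpow_zero, one_mul]

end RPow

section EstimationError

variable {ρ T : ℝ}

lemma sigmaW2_nonneg (hρ : 0 < ρ) : 0 ≤ sigmaW2 ρ T := by
  have hinv : 0 < ρ⁻¹ := inv_pos.2 hρ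
  unfold sigmaW2
  split_ifs with hT
  · rw [sub_nonneg, div_le_one (by positivity)]
    linarith
  · have : 0 < T := one_pos.trans_le (not_lt.1 hT)
    positivity

lemma sigmaW2_le_one (hρ : 0 < ρ) (hT : 0 ≤ T) : sigmaW2 ρ T ≤ 1 := by
  unfold sigmaW2
  split_ifs
  · exact sub_le_self 1 (by positivity)
  · exact div_le_one_of_le₀ (le_add_of_nonneg_right (by positivity)) (by positivity)

lemma one_sub_sigmaW2_of_lt_one (hT : T < 1) : 1 - sigmaW2 ρ T = T / (1 + ρ⁻¹) := by
  rw [sigmaW2, if_pos hT, sub_sub_cancel]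

lemma one_sub_sigmaW2_le (hρ : 0 < ρ) : 1 - sigmaW2 ρ T ≤ T / (1 + ρ⁻¹) := by
  rcases lt_or_ge T 1 with hT | hT
  · exact (one_sub_sigmaW2_of_lt_one hT).le
  · have : 0 < T := one_pos.trans_le hT
    rw [sigmaW2, if_neg hT.not_gt]
    calc 1 - 1 / (1 + ρ * T) = ρ * T / (1 + ρ * T) := by field_simp; ring
      _ ≤ ρ * T / (1 + ρ) := by
        gcongr
        exact le_mul_of_one_le_right hρ.le hT
      _ = T / (1 + ρ⁻¹) := by field_simp; ring

lemma continuous_sigmaW2 (hρ : 0 < ρ) : Continuous (sigmaW2 ρ) := by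
  have heq : sigmaW2 ρ = fun T ↦ if 1 ≤ T then 1 / (1 + ρ * T) else 1 - T / (1 + ρ⁻¹) := by
    funext T
    simp only [sigmaW2, ← not_le, ite_not]
  rw [heq]
  refine continuous_if_le continuous_const continuous_id ?_ (by fun_prop) ?_
  · refine continuousOn_const.div (by fun_prop) fun T hT ↦ ?_
    have : 0 < T := one_pos.trans_le hT
    positivity
  · rintro T rfl
    field_simp
    ring

end EstimationError

section LogArgument

variable {ρ N T B : ℝ}

/-- The bracket multiplying `N_t` in `capUB`: the bound on the beamforming gain per transmit antenna
with normalized feedback `B`. The number of antennas `N` is real. -/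
noncomputable def gainPerAntenna (N B : ℝ) : ℝ :=
  1 - (2 : ℝ) ^ (-B) +
    (1 + (eulerMascheroniConstant - 1) * (2 : ℝ) ^ (-B) + (2 : ℝ) ^ (-(B * N))) / (N - 1)

/-- The argument of the logarithm in `capUB`, with a real number of antennas `N`. -/
noncomputable def capArg (ρ N T B : ℝ) : ℝ :=
  1 + ρ * sigmaW2 ρ T + ρ * (1 - sigmaW2 ρ T) * N * gainPerAntenna N B

lemma capUB_eq (ρ L μ : ℝ) (N : ℕ) (p : ℝ × ℝ) :
    capUB ρ L μ N p = (L - p.1 - μ * p.2) / L * log (capArg ρ N p.1 p.2) := rfl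

lemma gainPerAntenna_correction_mem_Icc (hN : 0 ≤ N) (hB : 0 ≤ B) :
    1 + (eulerMascheroniConstant - 1) * (2 : ℝ) ^ (-B) + (2 : ℝ) ^ (-(B * N)) ∈
      Set.Icc (0 : ℝ) 2 := by
  have hγ_pos : 0 < eulerMascheroniConstant := by linarith [one_half_lt_eulerMascheroniConstant]
  have hγ_lt : eulerMascheroniConstant < 1 := by linarith [eulerMascheroniConstant_lt_two_thirds]
  have hB_pos : (0 : ℝ) < 2 ^ (-B) := by positivity
  have hBN_pos : (0 : ℝ) < 2 ^ (-(B * N)) := by positivity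
  have hB_le : (2 : ℝ) ^ (-B) ≤ 1 :=
    rpow_le_one_of_one_le_of_nonpos one_le_two (neg_nonpos.2 hB)
  have hBN_le : (2 : ℝ) ^ (-(B * N)) ≤ 1 :=
    rpow_le_one_of_one_le_of_nonpos one_le_two (neg_nonpos.2 (by positivity))
  constructor <;> nlinarith

lemma mul_log_two_mul_rpow_neg_le_gainPerAntenna (hN : 1 ≤ N) (hB : 0 ≤ B) :
    B * log 2 * (2 : ℝ) ^ (-B) ≤ gainPerAntenna N B :=
  (mul_log_mul_rpow_neg_le two_pos B).trans <| le_add_of_nonneg_right <|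
    div_nonneg (gainPerAntenna_correction_mem_Icc (by linarith) hB).1 (by linarith)

lemma gainPerAntenna_nonneg (hN : 1 ≤ N) (hB : 0 ≤ B) : 0 ≤ gainPerAntenna N B :=
  le_trans (by positivity) (mul_log_two_mul_rpow_neg_le_gainPerAntenna hN hB)

lemma mul_gainPerAntenna_le (hN : 2 ≤ N) (hB : 0 ≤ B) :
    N * gainPerAntenna N B ≤ N * (B * log 2) + 4 := by
  have hratio : N / (N - 1) ≤ 2 := by
    rw [div_le_iff₀ (by linarith)]
    linarith
  obtain ⟨hcorr_nonneg, hcorr_le⟩ := gainPerAntenna_correction_mem_Icc (N := N) (by linarith) hB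
  rw [gainPerAntenna, mul_add, mul_div_left_comm, mul_comm _ (N / (N - 1))]
  refine add_le_add (mul_le_mul_of_nonneg_left (one_sub_rpow_neg_le two_pos B) (by linarith)) ?_
  calc N / (N - 1) * _ ≤ 2 * 2 := mul_le_mul hratio hcorr_le hcorr_nonneg zero_le_two
    _ = 4 := by norm_num

lemma le_capArg (hρ : 0 < ρ) (hN : 1 ≤ N) (hT : 0 ≤ T) (hB : 0 ≤ B) :
    1 + ρ * (1 - sigmaW2 ρ T) * N * (B * log 2 * (2 : ℝ) ^ (-B)) ≤ capArg ρ N T B := by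
  have hσ : 0 ≤ 1 - sigmaW2 ρ T := sub_nonneg.2 (sigmaW2_le_one hρ hT)
  have := sigmaW2_nonneg (T := T) hρ
  unfold capArg
  gcongr
  · exact le_add_of_nonneg_right (by positivity)
  · exact mul_log_two_mul_rpow_neg_le_gainPerAntenna hN hB

lemma one_le_capArg (hρ : 0 < ρ) (hN : 1 ≤ N) (hT : 0 ≤ T) (hB : 0 ≤ B) :
    1 ≤ capArg ρ N T B := by
  have hσ : 0 ≤ 1 - sigmaW2 ρ T := sub_nonneg.2 (sigmaW2_le_one hρ hT)
  exact (le_add_of_nonneg_right (by positivity)).trans (le_capArg hρ hN hT hB)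

lemma capArg_le (hρ : 0 < ρ) (hN : 2 ≤ N) (hT : 0 ≤ T) (hB : 0 ≤ B) :
    capArg ρ N T B ≤ 1 + 5 * ρ + ρ * (T / (1 + ρ⁻¹)) * (N * (B * log 2)) := by
  have hσ_nonneg := sigmaW2_nonneg (T := T) hρ
  have hσ_le := sigmaW2_le_one hρ hT
  calc capArg ρ N T B
      = 1 + ρ * sigmaW2 ρ T + ρ * (1 - sigmaW2 ρ T) * (N * gainPerAntenna N B) := by
        rw [capArg, mul_assoc _ N]
    _ ≤ 1 + ρ * sigmaW2 ρ T + ρ * (1 - sigmaW2 ρ T) * (N * (B * log 2) + 4) := by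
        gcongr
        exact mul_gainPerAntenna_le hN hB
    _ ≤ 1 + 5 * ρ + ρ * (1 - sigmaW2 ρ T) * (N * (B * log 2)) := by nlinarith
    _ ≤ 1 + 5 * ρ + ρ * (T / (1 + ρ⁻¹)) * (N * (B * log 2)) := by
        gcongr
        exact one_sub_sigmaW2_le hρ

lemma continuous_capArg (hρ : 0 < ρ) (N : ℝ) :
    Continuous fun p : ℝ × ℝ ↦ capArg ρ N p.1 p.2 := by
  have hσ : Continuous fun p : ℝ × ℝ ↦ sigmaW2 ρ p.1 := (continuous_sigmaW2 hρ).comp continuous_fst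
  have hpow : Continuous fun x : ℝ ↦ (2 : ℝ) ^ x := continuous_const_rpow two_ne_zero
  unfold capArg gainPerAntenna
  fun_prop

end LogArgument

section Feasible

variable {ρ L μ : ℝ} {N : ℕ} {p : ℝ × ℝ}

lemma isCompact_feasible (hμ : 0 < μ) (L : ℝ) : IsCompact (feasible μ L) := by
  have hclosed : IsClosed (feasible μ L) :=
    (isClosed_le continuous_const continuous_fst).inter <|
      (isClosed_le continuous_const continuous_snd).inter <|
        isClosed_le (continuous_fst.add (continuous_snd.const_mul μ)) continuous_const
  refine (isCompact_Icc (a := (0, 0)) (b := (L, L / μ))).of_isClosed_subset hclosed ?_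
  rintro ⟨T, B⟩ ⟨hT, hB, hTB⟩
  dsimp only at hT hB hTB
  refine ⟨⟨hT, hB⟩, ?_, (le_div_iff₀ hμ).2 ?_⟩
  · nlinarith
  · linarith

lemma continuousOn_capUB (hρ : 0 < ρ) (hN : 1 ≤ N) :
    ContinuousOn (capUB ρ L μ N) (feasible μ L) := by
  change ContinuousOn
    (fun p : ℝ × ℝ ↦ (L - p.1 - μ * p.2) / L * log (capArg ρ N p.1 p.2)) (feasible μ L)
  refine ContinuousOn.mul (by fun_prop) ((continuous_capArg hρ N).continuousOn.log ?_)
  rintro p ⟨hT, hB, -⟩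
  exact (one_pos.trans_le (one_le_capArg hρ (mod_cast hN) hT hB)).ne'

theorem exists_isMaxOn_capUB (hρ : 0 < ρ) (hL : 0 ≤ L) (hμ : 0 < μ) (hN : 1 ≤ N) :
    ∃ p ∈ feasible μ L, IsMaxOn (capUB ρ L μ N) (feasible μ L) p :=
  (isCompact_feasible hμ L).exists_isMaxOn ⟨(0, 0), by simp [feasible, hL]⟩
    (continuousOn_capUB hρ hN)

/-- With `s = (T + μ B) / L` the left-hand side is `(1 - s) (1 + s) log (capArg …)`. -/
lemma capUB_mul_one_add_le (hρ : 0 < ρ) (hL : 0 < L) (hN : 1 ≤ N) (hp : p ∈ feasible μ L) :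
    capUB ρ L μ N p * (1 + (p.1 + μ * p.2) / L) ≤ log (capArg ρ N p.1 p.2) := by
  have hlog : 0 ≤ log (capArg ρ N p.1 p.2) :=
    log_nonneg (one_le_capArg hρ (mod_cast hN) hp.1 hp.2.1)
  have hweight : (L - p.1 - μ * p.2) / L = 1 - (p.1 + μ * p.2) / L := by field_simp; ring
  rw [capUB_eq, hweight]
  nlinarith [mul_nonneg hlog (sq_nonneg ((p.1 + μ * p.2) / L))]

end Feasible

section Scale

variable {ρ L μ N : ℝ}

/-- The leading order, for large `N`, of `capArg` at `T = L / log N`, `B = L / (μ log N)`. -/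
noncomputable def capScale (ρ L μ N : ℝ) : ℝ :=
  ρ * N * (L ^ 2 * log 2 / (μ * (1 + ρ⁻¹))) / log N ^ 2

lemma capScale_pos (hρ : 0 < ρ) (hL : 0 < L) (hμ : 0 < μ) (hN : 1 < N) :
    0 < capScale ρ L μ N := by
  have := log_pos hN
  unfold capScale
  positivity

lemma log_capScale (hρ : 0 < ρ) (hL : 0 < L) (hμ : 0 < μ) (hN : 1 < N) :
    log (capScale ρ L μ N) = log (ρ * N) +
      (log (L ^ 2 * log 2) - log (μ * (1 + ρ⁻¹))) - 2 * log (log N) := by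
  have hlog := log_pos hN
  rw [capScale, log_div (by positivity) (by positivity), log_mul (by positivity) (by positivity),
    log_div (by positivity) (by positivity), log_pow, Nat.cast_ofNat]

lemma tendsto_capScale_atTop (hρ : 0 < ρ) (hL : 0 < L) (hμ : 0 < μ) :
    Tendsto (capScale ρ L μ) atTop atTop := by
  have hratio : Tendsto (fun N ↦ exp (log N) / log N ^ 2) atTop atTop :=
    (tendsto_exp_div_pow_atTop 2).comp tendsto_log_atTop
  have hconst : 0 < ρ * (L ^ 2 * log 2 / (μ * (1 + ρ⁻¹))) := by positivity
  refine (hratio.const_mul_atTop hconst).congr' ?_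
  filter_upwards [eventually_gt_atTop 0] with N hN
  rw [exp_log hN, capScale]
  ring

lemma tendsto_log_capScale_div_log (hρ : 0 < ρ) (hL : 0 < L) (hμ : 0 < μ) :
    Tendsto (fun N ↦ log (capScale ρ L μ N) / log N) atTop (𝓝 1) := by
  have hinv : Tendsto (fun N ↦ (log N)⁻¹) atTop (𝓝 0) := tendsto_log_atTop.inv_tendsto_atTop
  have hloglog : Tendsto (fun N ↦ log (log N) / log N) atTop (𝓝 0) :=
    isLittleO_log_id_atTop.tendsto_div_nhds_zero.comp tendsto_log_atTop
  have hlim := ((hinv.const_mul (log ρ + (log (L ^ 2 * log 2) - log (μ * (1 + ρ⁻¹))))).const_add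
    1).sub (hloglog.const_mul 2)
  rw [mul_zero, mul_zero, add_zero, sub_zero] at hlim
  refine hlim.congr' ?_
  filter_upwards [eventually_gt_atTop 1] with N hN
  have hlog := log_pos hN
  rw [log_capScale hρ hL hμ hN, log_mul hρ.ne' (by positivity)]
  field_simp
  ring

end Scale

section NearMaximizers

variable {ρ L μ : ℝ}

lemma capArg_le_capScale_mul {N T B : ℝ} (hρ : 0 < ρ) (hL : 0 < L) (hμ : 0 < μ) (hN : 2 ≤ N)
    (hT : 0 ≤ T) (hB : 0 ≤ B) :
    capArg ρ N T B ≤ capScale ρ L μ N *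
      (T * log N / L * (B * log N / (L / μ)) + (1 + 5 * ρ) / capScale ρ L μ N) := by
  have hlog : 0 < log N := log_pos (by linarith)
  refine (capArg_le hρ hN hT hB).trans_eq ?_
  rw [mul_add, mul_div_cancel₀ _ (capScale_pos hρ hL hμ (by linarith)).ne', add_comm, capScale]
  field_simp

lemma capUB_add_mul_le_log {N : ℕ} {p : ℝ × ℝ} {r : ℝ} (hρ : 0 < ρ) (hL : 0 < L) (hμ : 0 < μ)
    (hN : 2 ≤ N) (hp : p ∈ feasible μ L)
    (hr : r ≤ capUB ρ L μ N p - log (capScale ρ L μ N)) :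
    capUB ρ L μ N p - log (capScale ρ L μ N) +
        (log (capScale ρ L μ N) + r) / log N * (p.1 * log N / L + p.2 * log N / (L / μ)) ≤
      log (p.1 * log N / L * (p.2 * log N / (L / μ)) + (1 + 5 * ρ) / capScale ρ L μ N) := by
  have hT : 0 ≤ p.1 := hp.1
  have hB : 0 ≤ p.2 := hp.2.1
  have hN' : (2 : ℝ) ≤ N := mod_cast hN
  have hlog : 0 < log (N : ℝ) := log_pos (by linarith)
  have hscale := capScale_pos hρ hL hμ (N := N) (by linarith)
  have hupper := log_le_log (one_pos.trans_le (one_le_capArg hρ (by linarith) hT hB))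
    (capArg_le_capScale_mul (L := L) (μ := μ) hρ hL hμ hN' hT hB)
  rw [log_mul hscale.ne' (by positivity)] at hupper
  have hused : 0 ≤ (p.1 + μ * p.2) / L := by positivity
  have hcoeff : (log (capScale ρ L μ N) + r) / log N * (p.1 * log N / L + p.2 * log N / (L / μ)) =
      (log (capScale ρ L μ N) + r) * ((p.1 + μ * p.2) / L) := by
    field_simp
  rw [hcoeff]
  linarith [capUB_mul_one_add_le hρ hL (one_le_two.trans hN) hp,
    mul_le_mul_of_nonneg_right (le_sub_iff_add_le'.1 hr) hused]

theorem tendsto_of_le_capUB_sub_log_capScale (hρ : 0 < ρ) (hL : 0 < L) (hμ : 0 < μ)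
    {x : ℕ → ℝ × ℝ} {r : ℕ → ℝ} (hx : ∀ᶠ N in atTop, x N ∈ feasible μ L)
    (hr : Tendsto r atTop (𝓝 (-2)))
    (hrx : ∀ᶠ N in atTop, r N ≤ capUB ρ L μ N (x N) - log (capScale ρ L μ N)) :
    Tendsto (fun N ↦ (x N).1 * log (N : ℝ)) atTop (𝓝 L) ∧
      Tendsto (fun N ↦ (x N).2 * log (N : ℝ)) atTop (𝓝 (L / μ)) ∧
      Tendsto (fun N : ℕ ↦ capUB ρ L μ N (x N) - log (capScale ρ L μ N)) atTop (𝓝 (-2)) := by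
  have hcast : Tendsto (Nat.cast : ℕ → ℝ) atTop atTop := tendsto_natCast_atTop_atTop
  have hN : ∀ᶠ N : ℕ in atTop, 2 ≤ N := eventually_ge_atTop 2
  have hc : Tendsto (fun N : ℕ ↦ (log (capScale ρ L μ N) + r N) / log N) atTop (𝓝 1) := by
    simpa [add_div] using ((tendsto_log_capScale_div_log hρ hL hμ).comp hcast).add
      (hr.div_atTop (tendsto_log_atTop.comp hcast))
  have hδ : Tendsto (fun N : ℕ ↦ (1 + 5 * ρ) / capScale ρ L μ N) atTop (𝓝 0) :=
    tendsto_const_nhds.div_atTop ((tendsto_capScale_atTop hρ hL hμ).comp hcast)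
  have hδ_pos : ∀ᶠ N : ℕ in atTop, 0 < (1 + 5 * ρ) / capScale ρ L μ N := by
    filter_upwards [hN] with N hN
    have := capScale_pos hρ hL hμ (N := N) (mod_cast hN)
    positivity
  have hu : ∀ᶠ N : ℕ in atTop, 0 ≤ (x N).1 * log N / L := by
    filter_upwards [hx] with N ⟨hT, _⟩
    positivity
  have hv : ∀ᶠ N : ℕ in atTop, 0 ≤ (x N).2 * log N / (L / μ) := by
    filter_upwards [hx] with N ⟨_, hB, _⟩
    positivity
  obtain ⟨hT, hB, hF⟩ := tendsto_of_add_mul_le_log hc hδ hr hδ_pos hu hv hrx (by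
    filter_upwards [hN, hx, hrx] with N using capUB_add_mul_le_log hρ hL hμ)
  have hLμ : L / μ ≠ 0 := by positivity
  exact ⟨by simpa only [div_mul_cancel₀ _ hL.ne', one_mul] using hT.mul_const L,
    by simpa only [div_mul_cancel₀ _ hLμ, one_mul] using hB.mul_const (L / μ), hF⟩

end NearMaximizers

section BalancedPoint

variable {ρ L μ : ℝ}

/-- The trial point `(L / log N, L / (μ log N))`, spending the same amount of the coherence time on
training and on feedback. -/
noncomputable def balancedPoint (L μ N : ℝ) : ℝ × ℝ := (L / log N, L / (μ * log N))

lemma balancedPoint_mem_feasible {N : ℝ} (hL : 0 ≤ L) (hμ : 0 < μ) (hN : 2 ≤ log N) :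
    balancedPoint L μ N ∈ feasible μ L := by
  have hlog : 0 < log N := by linarith
  refine ⟨by dsimp only [balancedPoint]; positivity, by dsimp only [balancedPoint]; positivity, ?_⟩
  calc L / log N + μ * (L / (μ * log N)) = L * (2 / log N) := by field_simp; ring
    _ ≤ L := mul_le_of_le_one_right hL ((div_le_one hlog).2 hN)

lemma capScale_mul_le_capArg_balancedPoint {N : ℝ} (hρ : 0 < ρ) (hL : 0 < L) (hμ : 0 < μ)
    (hN : 1 < N) (hLN : L < log N) :
    capScale ρ L μ N * (2 : ℝ) ^ (-(L / (μ * log N))) ≤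
      capArg ρ N (balancedPoint L μ N).1 (balancedPoint L μ N).2 := by
  have hlog := log_pos hN
  have hlower := le_capArg hρ hN.le (T := L / log N) (B := L / (μ * log N)) (by positivity)
    (by positivity)
  rw [one_sub_sigmaW2_of_lt_one ((div_lt_one hlog).2 hLN)] at hlower
  refine le_trans ?_ ((le_add_of_nonneg_left zero_le_one).trans hlower)
  apply le_of_eq
  rw [capScale]
  field_simp

lemma le_capUB_balancedPoint {N : ℕ} (hρ : 0 < ρ) (hL : 0 < L) (hμ : 0 < μ)
    (hN : 2 ≤ log (N : ℝ)) (hLN : L < log (N : ℝ)) :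
    (1 - 2 / log N) * (log (capScale ρ L μ N) - L / (μ * log N) * log 2) ≤
      capUB ρ L μ N (balancedPoint L μ N) := by
  have hlog : 0 < log (N : ℝ) := by linarith
  have hN_one : 1 < (N : ℝ) := (log_pos_iff N.cast_nonneg).1 hlog
  have hscale := capScale_pos hρ hL hμ hN_one
  have hweight : (L - L / log N - μ * (L / (μ * log N))) / L = 1 - 2 / log N := by
    field_simp
    ring
  have hlower := log_le_log (by positivity)
    (capScale_mul_le_capArg_balancedPoint hρ hL hμ hN_one hLN)
  rw [log_mul hscale.ne' (by positivity), log_rpow two_pos, neg_mul, ← sub_eq_add_neg] at hlower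
  rw [capUB_eq]
  dsimp only [balancedPoint] at hlower ⊢
  rw [hweight]
  exact mul_le_mul_of_nonneg_left hlower (sub_nonneg.2 ((div_le_one hlog).2 hN))

lemma tendsto_balancedPoint_lower_bound (hρ : 0 < ρ) (hL : 0 < L) (hμ : 0 < μ) :
    Tendsto (fun N ↦ (1 - 2 / log N) * (log (capScale ρ L μ N) - L / (μ * log N) * log 2) -
      log (capScale ρ L μ N)) atTop (𝓝 (-2)) := by
  have htwo : Tendsto (fun N ↦ 2 / log N) atTop (𝓝 0) :=
    tendsto_const_nhds.div_atTop tendsto_log_atTop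
  have hloss : Tendsto (fun N ↦ L / (μ * log N) * log 2) atTop (𝓝 0) := by
    simpa using (tendsto_const_nhds.div_atTop
      (tendsto_log_atTop.const_mul_atTop hμ)).mul_const (log 2)
  have hlim := ((tendsto_log_capScale_div_log hρ hL hμ).const_mul (-2)).sub
    ((htwo.const_sub 1).mul hloss)
  rw [mul_one, mul_zero, sub_zero] at hlim
  refine hlim.congr fun N ↦ ?_
  ring

end BalancedPoint

/-- Asymptotics of the optimized capacity upper bound (proof of Theorem 2): `F_{N_t}`
attains a maximum on the feasible set, any maximizers `(T̄°, B̄°)` satisfy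
`T̄°·log N_t → L̄` and `B̄°·log N_t → L̄/μ`, and the maximum value `M(N_t)` satisfies
`M(N_t) − log(ρ N_t) + 2 log log N_t → log(L̄² log 2) − log(μ(1 + ρ⁻¹)) − 2`. -/
theorem optimized_capacity_upper_bound_asymptotics
    (ρ L μ : ℝ) (hρ : 0 < ρ) (hL : 0 < L) (hμ : 0 < μ) :
    (∀ Nt : ℕ, 2 ≤ Nt → ∃ p ∈ feasible μ L, IsMaxOn (capUB ρ L μ Nt) (feasible μ L) p) ∧
    (∀ sel : ℕ → ℝ × ℝ,
      (∀ Nt : ℕ, 2 ≤ Nt →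
        sel Nt ∈ feasible μ L ∧ IsMaxOn (capUB ρ L μ Nt) (feasible μ L) (sel Nt)) →
      Tendsto (fun Nt : ℕ => (sel Nt).1 * Real.log (Nt : ℝ)) atTop (nhds L) ∧
      Tendsto (fun Nt : ℕ => (sel Nt).2 * Real.log (Nt : ℝ)) atTop (nhds (L / μ)) ∧
      Tendsto (fun Nt : ℕ =>
          capUB ρ L μ Nt (sel Nt) - Real.log (ρ * (Nt : ℝ))
            + 2 * Real.log (Real.log (Nt : ℝ)))
        atTop
        (nhds (Real.log (L ^ 2 * Real.log 2) - Real.log (μ * (1 + ρ⁻¹)) - 2))) := by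
  refine ⟨fun N hN ↦ exists_isMaxOn_capUB hρ hL.le hμ (by lia), fun sel hsel ↦ ?_⟩
  have hcast : Tendsto (Nat.cast : ℕ → ℝ) atTop atTop := tendsto_natCast_atTop_atTop
  have hlog : Tendsto (fun N : ℕ ↦ log (N : ℝ)) atTop atTop := tendsto_log_atTop.comp hcast
  have hN : ∀ᶠ N : ℕ in atTop, 2 ≤ N := eventually_ge_atTop 2
  obtain ⟨hT, hB, hF⟩ := tendsto_of_le_capUB_sub_log_capScale hρ hL hμ
    (hN.mono fun N hN ↦ (hsel N hN).1) ((tendsto_balancedPoint_lower_bound hρ hL hμ).comp hcast) (by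
      filter_upwards [hN, hlog.eventually_ge_atTop 2, hlog.eventually_gt_atTop L]
        with N hN hlogN hLN
      exact sub_le_sub_right ((le_capUB_balancedPoint hρ hL hμ hlogN hLN).trans
        ((hsel N hN).2 (balancedPoint_mem_feasible hL.le hμ hlogN))) _)
  refine ⟨hT, hB, ?_⟩
  have hlim := hF.add_const (log (L ^ 2 * log 2) - log (μ * (1 + ρ⁻¹)))
  rw [neg_add_eq_sub] at hlim
  refine hlim.congr' ?_
  filter_upwards [hN] with N hN
  rw [log_capScale hρ hL hμ (mod_cast hN)]
  ring
end
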